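/- arXiv:2208.04002 — 6 statements merged into one kernel-verified Lean document; each statement's English description precedes it below -/
import Mathlib

section
/- Let F be a field, V a finite-dimensional F-vector space, and Γ ⊆ Δ two subgroups of GL(V). Assume that V is semisimple as a representation of Γ and as a representation of Δ, and that the commutants of Γ and of Δ in End_F(V) are equal, i.e. {f ∈ End_F(V) : f ∘ g = g ∘ f for all g ∈ Γ} = {f ∈ End_F(V) : f ∘ g = g ∘ f for all g ∈ Δ}. Then every Δ-invariant subspace W of V on which Δ acts irreducibly (W ≠ 0 and the only Δ-invariant subspaces of W are 0 and W) is also irreducible as a representation of Γ. -/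
/-- A subspace `W` of `V` is invariant under a subgroup `Γ` of `GL(V)`. -/
def Invariant {F V : Type*} [Field F] [AddCommGroup V] [Module F V]
    (Γ : Subgroup (Module.End F V)ˣ) (W : Submodule F V) : Prop :=
  ∀ g ∈ Γ, ∀ v ∈ W, (g : Module.End F V) v ∈ W

/-- `V` is semisimple as a representation of `Γ`: every invariant subspace
admits an invariant complement. -/
def IsSemisimpleRep {F V : Type*} [Field F] [AddCommGroup V] [Module F V]
    (Γ : Subgroup (Module.End F V)ˣ) : Prop :=
  ∀ W : Submodule F V, Invariant Γ W →
    ∃ W' : Submodule F V, Invariant Γ W' ∧ IsCompl W W'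

/-- The commutant of a subgroup `Γ` of `GL(V)` in `End_F(V)`. -/
def Commutant {F V : Type*} [Field F] [AddCommGroup V] [Module F V]
    (Γ : Subgroup (Module.End F V)ˣ) : Set (Module.End F V) :=
  {f | ∀ g ∈ Γ, f * (g : Module.End F V) = (g : Module.End F V) * f}

/-- `Γ` acts irreducibly on the subspace `W`: `W ≠ 0` and the only
`Γ`-invariant subspaces of `W` are `0` and `W`. -/
def IrreducibleOn {F V : Type*} [Field F] [AddCommGroup V] [Module F V]
    (Γ : Subgroup (Module.End F V)ˣ) (W : Submodule F V) : Prop :=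
  W ≠ ⊥ ∧ ∀ U : Submodule F V, U ≤ W → Invariant Γ U → U = ⊥ ∨ U = W

/-- If `Γ ⊆ Δ` are subgroups of `GL(V)`, both acting semisimply on the
finite-dimensional space `V` with equal commutants in `End_F(V)`, then every
`Δ`-invariant subspace on which `Δ` acts irreducibly is also irreducible as a
representation of `Γ`. -/
theorem irreducibleOn_of_commutant_eq
    {F V : Type*} [Field F] [AddCommGroup V] [Module F V] [FiniteDimensional F V]
    (Γ Δ : Subgroup (Module.End F V)ˣ) (hΓΔ : Γ ≤ Δ)
    (hssΓ : IsSemisimpleRep Γ) (hssΔ : IsSemisimpleRep Δ)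
    (hcomm : Commutant Γ = Commutant Δ)
    (W : Submodule F V) (hWinv : Invariant Δ W) (hWirr : IrreducibleOn Δ W) :
    IrreducibleOn Γ W := by
  refine ⟨hWirr.1, fun U hUW hU => hWirr.2 U hUW ?_⟩
  obtain ⟨U', hU', hc⟩ := hssΓ U hU
  -- The projection onto `U` along a `Γ`-invariant complement commutes with `Γ`, hence with `Δ`,
  -- so its range `U` is `Δ`-invariant.
  have hp : U.projection U' hc ∈ Commutant Δ := by
    rw [← hcomm]
    intro g hg
    ext v
    obtain ⟨a, ha, b, hb, rfl⟩ :=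
      Submodule.mem_sup.1 (hc.sup_eq_top ▸ Submodule.mem_top : v ∈ U ⊔ U')
    simp only [Module.End.mul_apply, map_add,
      Submodule.projection_apply_of_mem_left hc ha,
      Submodule.projection_apply_of_mem_right hc hb,
      Submodule.projection_apply_of_mem_left hc (hU g hg a ha),
      Submodule.projection_apply_of_mem_right hc (hU' g hg b hb), map_zero]
  intro g hg v hv
  have h := LinearMap.congr_fun (hp g hg) v
  simp only [Module.End.mul_apply, Submodule.projection_apply_of_mem_left hc hv] at h
  rw [← h]
  exact Submodule.projection_apply_mem hc _
end

section
/- Let F be a field, V a finite-dimensional F-vector space, and Γ ⊆ Δ two subgroups of GL(V). Assume that V is semisimple as a representation of Γ and as a representation of Δ, and that the commutants of Γ and of Δ in End_F(V) are equal. Let W and W' be Δ-invariant subspaces of V on each of which Δ acts irreducibly. Then there exists an F-linear isomorphism W → W' commuting with the action of every element of Γ if and only if there exists an F-linear isomorphism W → W' commuting with the action of every element of Δ. -/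
/-- A linear map `φ : W → W'` between subspaces of `V` commutes with the
(restricted) action of every element of `Γ`: whenever `g ∈ Γ` maps `w ∈ W` to
`w₂ ∈ W`, it maps `φ w` to `φ w₂`. -/
def CommutesWith {F V : Type*} [Field F] [AddCommGroup V] [Module F V]
    (Γ : Subgroup (Module.End F V)ˣ) {W W' : Submodule F V}
    (φ : W →ₗ[F] W') : Prop :=
  ∀ g ∈ Γ, ∀ w w₂ : W, (w₂ : V) = (g : Module.End F V) (w : V) →
    (φ w₂ : V) = (g : Module.End F V) (φ w : V)

/-- A `Γ`-equivariant map out of `W` is `Δ`-equivariant, by extending it by zero on a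
`Δ`-invariant complement of `W` and using the equality of commutants. -/
theorem CommutesWith.of_commutant_eq
    {F V : Type*} [Field F] [AddCommGroup V] [Module F V]
    {Γ Δ : Subgroup (Module.End F V)ˣ} (hΓΔ : Γ ≤ Δ)
    (hssΔ : IsSemisimpleRep Δ) (hcomm : Commutant Γ = Commutant Δ)
    {W W' : Submodule F V} (hWinv : Invariant Δ W)
    {φ : W →ₗ[F] W'} (hφ : CommutesWith Γ φ) : CommutesWith Δ φ := by
  obtain ⟨C, hC, hWC⟩ := hssΔ W hWinv
  let p : V →ₗ[F] W := W.projectionOnto C hWC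
  have hpW : ∀ w : W, p w = w := Submodule.projectionOnto_apply_left hWC
  have hpC : ∀ c ∈ C, p c = 0 := fun c hc =>
    (Submodule.projectionOnto_apply_eq_zero_iff hWC).2 hc
  let f : Module.End F V := W'.subtype ∘ₗ φ ∘ₗ p
  have hfW : ∀ w : W, f w = φ w := fun w => by simp [f, hpW]
  have hfC : ∀ c ∈ C, f c = 0 := fun c hc => by simp [f, hpC c hc]
  have hf : f ∈ Commutant Γ := by
    intro g hg
    ext v
    obtain ⟨w, hw, c, hc, rfl⟩ := Submodule.mem_sup.1
      (hWC.sup_eq_top ▸ Submodule.mem_top : v ∈ W ⊔ C)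
    have hgw := hWinv g (hΓΔ hg) w hw
    have hgc := hC g (hΓΔ hg) c hc
    have h1 : f ((g : Module.End F V) w) = (g : Module.End F V) (f w) :=
      (hfW ⟨_, hgw⟩).trans ((hφ g hg ⟨w, hw⟩ ⟨_, hgw⟩ rfl).trans
        (congrArg (g : Module.End F V) (hfW ⟨w, hw⟩).symm))
    simp only [Module.End.mul_apply, map_add, h1, hfC c hc, hfC _ hgc, map_zero]
  rw [hcomm] at hf
  intro g hg w w₂ h
  rw [← hfW w, ← hfW w₂, h]
  exact LinearMap.congr_fun (hf g hg) (w : V)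

/-- If `Γ ⊆ Δ` are subgroups of `GL(V)`, both acting semisimply on the
finite-dimensional space `V` with equal commutants, and `W`, `W'` are
`Δ`-invariant subspaces on which `Δ` acts irreducibly, then `W ≅ W'` as
representations of `Γ` if and only if `W ≅ W'` as representations of `Δ`. -/
theorem iso_as_subrep_iff_of_commutant_eq
    {F V : Type*} [Field F] [AddCommGroup V] [Module F V] [FiniteDimensional F V]
    (Γ Δ : Subgroup (Module.End F V)ˣ) (hΓΔ : Γ ≤ Δ)
    (hssΓ : IsSemisimpleRep Γ) (hssΔ : IsSemisimpleRep Δ)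
    (hcomm : Commutant Γ = Commutant Δ)
    (W W' : Submodule F V) (hWinv : Invariant Δ W) (hW'inv : Invariant Δ W')
    (hWirr : IrreducibleOn Δ W) (hW'irr : IrreducibleOn Δ W') :
    (∃ e : W ≃ₗ[F] W', CommutesWith Γ (e : W →ₗ[F] W')) ↔
    (∃ e : W ≃ₗ[F] W', CommutesWith Δ (e : W →ₗ[F] W')) := by
  exact ⟨fun ⟨e, he⟩ => ⟨e, he.of_commutant_eq hΓΔ hssΔ hcomm hWinv⟩,
    fun ⟨e, he⟩ => ⟨e, fun g hg => he g (hΓΔ hg)⟩⟩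
end

section
/- Let F be a field, V a finite-dimensional F-vector space, and Γ ⊆ Δ two subgroups of GL(V). Assume that V is semisimple as a representation of Γ and as a representation of Δ, and that the commutants of Γ and of Δ in End_F(V) are equal. Then a subspace W of V is Γ-invariant if and only if it is Δ-invariant; that is, the Δ-subrepresentations of V and the Γ-subrepresentations of V coincide. -/
/-- If `Γ ⊆ Δ` are subgroups of `GL(V)`, both acting semisimply on the
finite-dimensional space `V` with equal commutants in `End_F(V)`, then a
subspace of `V` is `Γ`-invariant if and only if it is `Δ`-invariant. -/
theorem invariant_iff_of_commutant_eq
    {F V : Type*} [Field F] [AddCommGroup V] [Module F V] [FiniteDimensional F V]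
    (Γ Δ : Subgroup (Module.End F V)ˣ) (hΓΔ : Γ ≤ Δ)
    (hssΓ : IsSemisimpleRep Γ) (hssΔ : IsSemisimpleRep Δ)
    (hcomm : Commutant Γ = Commutant Δ) :
    ∀ W : Submodule F V, Invariant Γ W ↔ Invariant Δ W := by
  intro W
  refine ⟨fun hW => ?_, fun hW g hg => hW g (hΓΔ hg)⟩
  obtain ⟨W', hW', hc⟩ := hssΓ W hW
  have hp : W.projection W' hc ∈ Commutant Γ := by
    intro g hg
    ext v
    obtain ⟨a, ha, b, hb, rfl⟩ := Submodule.mem_sup.mp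
      (show v ∈ W ⊔ W' from hc.sup_eq_top ▸ Submodule.mem_top)
    simp only [Module.End.mul_apply, map_add]
    rw [Submodule.projection_apply_of_mem_left hc ha,
      Submodule.projection_apply_of_mem_left hc (hW g hg a ha),
      (Submodule.projection_apply_eq_zero_iff hc).mpr hb,
      (Submodule.projection_apply_eq_zero_iff hc).mpr (hW' g hg b hb), map_zero]
  rw [hcomm] at hp
  intro g hg v hv
  have h := LinearMap.congr_fun (hp g hg) v
  simp only [Module.End.mul_apply, Submodule.projection_apply_of_mem_left hc hv] at h
  exact h ▸ Submodule.projection_apply_mem hc _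
end

section
/- Let F be a field, V a finite-dimensional F-vector space, and Γ ⊆ Δ two subgroups of GL(V). Assume that V is semisimple as a representation of Γ and as a representation of Δ, and that the commutants of Γ and of Δ in End_F(V) are equal. Let W and W' be Δ-invariant subspaces of V. Then every F-linear map φ : W → W' that commutes with the action of every element of Γ also commutes with the action of every element of Δ; in other words, Hom_Γ(W, W') = Hom_Δ(W, W'). -/
/-- If `Γ ⊆ Δ` are subgroups of `GL(V)`, both acting semisimply on the
finite-dimensional space `V` with equal commutants, and `W`, `W'` are
`Δ`-invariant subspaces, then every `F`-linear map `W → W'` commuting with the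
action of `Γ` also commutes with the action of `Δ`:
`Hom_Γ(W, W') = Hom_Δ(W, W')`. -/
theorem homΓ_eq_homΔ_of_commutant_eq
    {F V : Type*} [Field F] [AddCommGroup V] [Module F V] [FiniteDimensional F V]
    (Γ Δ : Subgroup (Module.End F V)ˣ) (hΓΔ : Γ ≤ Δ)
    (hssΓ : IsSemisimpleRep Γ) (hssΔ : IsSemisimpleRep Δ)
    (hcomm : Commutant Γ = Commutant Δ)
    (W W' : Submodule F V) (hWinv : Invariant Δ W) (hW'inv : Invariant Δ W')
    (φ : W →ₗ[F] W') (hφ : CommutesWith Γ φ) : CommutesWith Δ φ := by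
  obtain ⟨U, hU, hc⟩ := hssΓ W fun g hg => hWinv g (hΓΔ hg)
  -- The extension of `φ` to `V` that vanishes on the `Γ`-invariant complement `U` of `W`.
  let f : Module.End F V := LinearMap.ofIsCompl hc (W'.subtype ∘ₗ φ) 0
  have hfW (w : W) : f w = φ w := LinearMap.ofIsCompl_apply_left hc w
  have hfU (u : U) : f u = 0 := LinearMap.ofIsCompl_apply_right hc u
  have hf : f ∈ Commutant Γ := by
    intro g hg
    ext v
    obtain ⟨w, hw, u, hu, rfl⟩ := Submodule.mem_sup.1 (hc.sup_eq_top ▸ Submodule.mem_top (x := v))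
    have hgw := hWinv g (hΓΔ hg) w hw
    have h₁ := hfW ⟨_, hgw⟩
    have h₂ := hfU ⟨_, hU g hg u hu⟩
    have h₃ := hfW ⟨w, hw⟩
    have h₄ := hfU ⟨u, hu⟩
    have h₅ := hφ g hg ⟨w, hw⟩ ⟨_, hgw⟩ rfl
    dsimp only at h₁ h₂ h₃ h₄
    simp only [Module.End.mul_apply, map_add, h₁, h₂, h₃, h₄, h₅, map_zero]
  rw [hcomm] at hf
  intro g hg w w₂ h
  rw [← hfW, ← hfW, h]
  exact LinearMap.congr_fun (hf g hg) w
end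

section
/- Let F be a field, V a finite-dimensional F-vector space, G a group, ρ : G → GL(V) a representation, τ : G → G a group automorphism, μ : G → Fˣ a group homomorphism, and B : V × V → F a nondegenerate F-bilinear form satisfying B(ρ(g)x, ρ(τ(g))y) = μ(g)·B(x, y) for all g ∈ G and x, y ∈ V. Assume that V is semisimple as a representation of G (every G-invariant subspace admits a G-invariant complement) and multiplicity-free in the sense that any two G-invariant subspaces of V on which G acts irreducibly and which intersect trivially are non-isomorphic as representations of G. Let W be a G-invariant subspace of V on which G acts irreducibly, and suppose the τ-twist W^τ is isomorphic, as a representation of G, to the μ-twisted dual W^∨ ⊗ μ. Then the restriction of B to W × W is nondegenerate. -/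
/-!
The isomorphism `Ψ : W^τ ≅ W^∨ ⊗ μ` turns the pairing `B : V × W → F` into a linear map
`φ : V → W` characterised by `Ψ u (φ x) = B x u` for `u ∈ W`. It is `G`-equivariant because
`Ψ` and `B` have the same similitude character, and it is surjective because `B` is
nondegenerate on `V`. By irreducibility `W ⊓ ker φ` is `0` or `W`. In the second case a
`G`-invariant complement of `ker φ` is mapped isomorphically onto `W` and meets `W` trivially,
which contradicts multiplicity-freeness. So `φ` restricts to an automorphism of `W`, and
since `Ψ` is perfect, `B` is nondegenerate on `W × W`.
-/

/-- The map `φ : V → W` representing the pairing `B : V × W → F` through a perfect pairing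
`Ψ` on `W`. -/
theorem exists_representing_map
    {F V : Type*} [Field F] [AddCommGroup V] [Module F V] [FiniteDimensional F V]
    (B : V →ₗ[F] V →ₗ[F] F) (hBl : ∀ x : V, (∀ y : V, B x y = 0) → x = 0)
    (W : Submodule F V) (Ψ : W ≃ₗ[F] (W →ₗ[F] F)) :
    ∃ φ : V →ₗ[F] W, Function.Surjective φ ∧ ∀ (x : V) (u : W), Ψ u (φ x) = B x u := by
  -- `ψ w = (u ↦ Ψ u w)`, the transpose of `Ψ` under `W ≃ W^∨∨`.
  let ψ : W ≃ₗ[F] Module.Dual F W := (Module.evalEquiv F W).trans Ψ.dualMap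
  have hψ : ∀ w u : W, ψ w u = Ψ u w := fun w u => rfl
  have hBsurj : Function.Surjective B := by
    have hinj : Function.Injective B := by
      rw [injective_iff_map_eq_zero]
      intro x hx
      exact hBl x fun y => by rw [hx]; rfl
    exact (LinearMap.injective_iff_surjective_of_finrank_eq_finrank
      (Subspace.dual_finrank_eq (K := F) (V := V)).symm).1 hinj
  refine ⟨ψ.symm.toLinearMap ∘ₗ W.subtype.dualMap ∘ₗ B, ?_, ?_⟩
  · exact ψ.symm.surjective.comp
      ((LinearMap.dualMap_surjective_of_injective W.injective_subtype).comp hBsurj)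
  · intro x u
    rw [← hψ]
    simp

/-- Let `ρ : G → GL(V)` be a representation on a finite-dimensional `F`-vector
space, `τ` a group automorphism of `G`, `μ : G → Fˣ` a character, and `B` a
nondegenerate bilinear form satisfying `B(ρ(g)x, ρ(τ(g))y) = μ(g)·B(x,y)`.
Assume `V` is semisimple and multiplicity-free as a representation of `G`.
If `W` is a `G`-invariant irreducible subspace whose `τ`-twist `W^τ` is
isomorphic as a representation of `G` to the `μ`-twisted dual `W^∨ ⊗ μ`, then
the restriction of `B` to `W × W` is nondegenerate. -/
theorem twisted_pairing_nondegenerate_on_selfdual_factor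
    {F V : Type*} [Field F] [AddCommGroup V] [Module F V] [FiniteDimensional F V]
    {G : Type*} [Group G] (ρ : G →* (Module.End F V)ˣ) (τ : G ≃* G) (μ : G →* Fˣ)
    (B : V →ₗ[F] V →ₗ[F] F)
    (hB : ∀ (g : G) (x y : V),
      B ((ρ g : Module.End F V) x) ((ρ (τ g) : Module.End F V) y) = (μ g : F) * B x y)
    (hBnd : (∀ x : V, (∀ y : V, B x y = 0) → x = 0) ∧
            (∀ y : V, (∀ x : V, B x y = 0) → y = 0))
    (hss : ∀ W : Submodule F V, (∀ g : G, ∀ v ∈ W, (ρ g : Module.End F V) v ∈ W) →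
      ∃ W' : Submodule F V,
        (∀ g : G, ∀ v ∈ W', (ρ g : Module.End F V) v ∈ W') ∧ IsCompl W W')
    (hmf : ∀ W₁ W₂ : Submodule F V,
      (∀ g : G, ∀ v ∈ W₁, (ρ g : Module.End F V) v ∈ W₁) →
      (∀ g : G, ∀ v ∈ W₂, (ρ g : Module.End F V) v ∈ W₂) →
      (W₁ ≠ ⊥ ∧ ∀ U : Submodule F V, U ≤ W₁ →
        (∀ g : G, ∀ v ∈ U, (ρ g : Module.End F V) v ∈ U) → U = ⊥ ∨ U = W₁) →
      (W₂ ≠ ⊥ ∧ ∀ U : Submodule F V, U ≤ W₂ →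
        (∀ g : G, ∀ v ∈ U, (ρ g : Module.End F V) v ∈ U) → U = ⊥ ∨ U = W₂) →
      W₁ ⊓ W₂ = ⊥ →
      ¬ ∃ e : W₁ ≃ₗ[F] W₂, ∀ (g : G) (u u₂ : W₁),
          (u₂ : V) = (ρ g : Module.End F V) (u : V) →
          (e u₂ : V) = (ρ g : Module.End F V) (e u : V))
    (W : Submodule F V)
    (hWinv : ∀ g : G, ∀ v ∈ W, (ρ g : Module.End F V) v ∈ W)
    (hWirr : W ≠ ⊥ ∧ ∀ U : Submodule F V, U ≤ W →
      (∀ g : G, ∀ v ∈ U, (ρ g : Module.End F V) v ∈ U) → U = ⊥ ∨ U = W)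
    (hdual : ∃ Ψ : W ≃ₗ[F] (W →ₗ[F] F), ∀ (g : G) (u w : W),
      Ψ ⟨(ρ (τ g) : Module.End F V) (u : V), hWinv (τ g) (u : V) u.2⟩ w
        = (μ g : F) * Ψ u ⟨(ρ g⁻¹ : Module.End F V) (w : V), hWinv g⁻¹ (w : V) w.2⟩) :
    (∀ x ∈ W, (∀ y ∈ W, B x y = 0) → x = 0) ∧
    (∀ y ∈ W, (∀ x ∈ W, B x y = 0) → y = 0) := by
  obtain ⟨Ψ, hΨ⟩ := hdual
  obtain ⟨φ, hφs, hφ⟩ := exists_representing_map B hBnd.1 W Ψ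
  have hinv : ∀ (g : G) (v : V),
      (ρ g : Module.End F V) ((ρ g⁻¹ : Module.End F V) v) = v := by
    intro g v
    rw [← Module.End.mul_apply, ← Units.val_mul, ← map_mul]
    simp
  have hinv' : ∀ (g : G) (v : V),
      (ρ g⁻¹ : Module.End F V) ((ρ g : Module.End F V) v) = v := by
    intro g v
    simpa using hinv g⁻¹ v
  have hequiv : ∀ (g : G) (x : V),
      (φ ((ρ g : Module.End F V) x) : V) = (ρ g : Module.End F V) (φ x : V) := by
    intro g x
    suffices h : φ ((ρ g : Module.End F V) x)
        = ⟨(ρ g : Module.End F V) (φ x : V), hWinv g _ (φ x).2⟩ from congrArg Subtype.val h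
    -- The functionals `Ψ u` separate points of `W`; `ρ (τ g)` is onto on `W`.
    rw [← sub_eq_zero, ← Module.forall_dual_apply_eq_zero_iff F]
    intro f
    obtain ⟨u, rfl⟩ := Ψ.surjective f
    obtain ⟨u', rfl⟩ : ∃ u' : W,
        (⟨(ρ (τ g) : Module.End F V) (u' : V), hWinv (τ g) (u' : V) u'.2⟩ : W) = u :=
      ⟨⟨_, hWinv (τ g)⁻¹ _ u.2⟩, Subtype.ext (hinv (τ g) u)⟩
    rw [map_sub, sub_eq_zero, hφ, hΨ]
    simp only [hinv', hB, Subtype.coe_eta, hφ]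
  have hkerinv : ∀ g : G, ∀ v ∈ LinearMap.ker φ,
      (ρ g : Module.End F V) v ∈ LinearMap.ker φ := by
    intro g v hv
    rw [LinearMap.mem_ker] at hv ⊢
    apply Subtype.ext
    rw [hequiv, hv]
    simp
  have hbot : W ⊓ LinearMap.ker φ = ⊥ := by
    refine (hWirr.2 (W ⊓ LinearMap.ker φ) inf_le_left
      fun g v hv => ⟨hWinv g v hv.1, hkerinv g v hv.2⟩).resolve_right fun hW => ?_
    have hWker : W ≤ LinearMap.ker φ := inf_eq_left.1 hW
    obtain ⟨K, hKinv, hK⟩ := hss _ hkerinv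
    have hKinj : ∀ v ∈ K, φ v = 0 → v = 0 := fun v hv h0 =>
      (Submodule.disjoint_def.1 hK.disjoint) v h0 hv
    have hKsurj : ∀ w : W, ∃ k ∈ K, φ k = w := by
      intro w
      obtain ⟨v, rfl⟩ := hφs w
      obtain ⟨a, ha, k, hk, rfl⟩ :=
        Submodule.mem_sup.1 (hK.sup_eq_top ▸ Submodule.mem_top (x := v))
      exact ⟨k, hk, by rw [map_add, LinearMap.mem_ker.1 ha, zero_add]⟩
    have hbij : Function.Bijective (φ.domRestrict K) := by
      constructor
      · rw [injective_iff_map_eq_zero]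
        exact fun k hk => Subtype.ext (hKinj k k.2 hk)
      · intro w
        obtain ⟨k, hk, h⟩ := hKsurj w
        exact ⟨⟨k, hk⟩, h⟩
    refine hmf K W hKinv hWinv ⟨?_, ?_⟩ hWirr ?_
      ⟨LinearEquiv.ofBijective (φ.domRestrict K) hbij, ?_⟩
    · rintro rfl
      apply hWirr.1
      rw [Submodule.eq_bot_iff]
      intro w hw
      obtain ⟨k, hk, h⟩ := hKsurj ⟨w, hw⟩
      rw [(Submodule.mem_bot F).1 hk, map_zero] at h
      exact (congrArg Subtype.val h).symm
    -- Irreducibility of `K`: an invariant `U ≤ K` has invariant image in `W`.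
    · intro U hUK hU
      rcases hWirr.2 (U.map (W.subtype ∘ₗ φ)) (by rintro _ ⟨u, -, rfl⟩; exact (φ u).2)
        (by
          rintro g _ ⟨u, hu, rfl⟩
          exact ⟨_, hU g u hu, hequiv g u⟩) with h | h
      · left
        rw [Submodule.eq_bot_iff]
        intro u hu
        refine hKinj u (hUK hu) (Subtype.ext ?_)
        exact (Submodule.mem_bot F).1 (h ▸ Submodule.mem_map_of_mem hu)
      · right
        refine le_antisymm hUK fun k hk => ?_
        have hmem : (φ k : V) ∈ U.map (W.subtype ∘ₗ φ) := by
          rw [h]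
          exact (φ k).2
        obtain ⟨u, hu, huk⟩ := hmem
        have hφuk : φ u = φ k := Subtype.ext huk
        have : k - u = 0 := hKinj _ (K.sub_mem hk (hUK hu)) (by rw [map_sub, hφuk, sub_self])
        rwa [sub_eq_zero.1 this]
    · rw [eq_bot_iff, ← hK.inf_eq_bot]
      exact fun v hv => ⟨hWker hv.2, hv.1⟩
    · intro g u u₂ h
      change (φ (u₂ : V) : V) = _
      rw [h]
      exact hequiv g u
  have hinjW : ∀ x ∈ W, φ x = 0 → x = 0 := fun x hx h0 =>
    (Submodule.mem_bot F).1 (hbot ▸ (⟨hx, h0⟩ : x ∈ W ⊓ LinearMap.ker φ))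
  constructor
  · intro x hx h
    refine hinjW x hx ?_
    rw [← Module.forall_dual_apply_eq_zero_iff F]
    intro f
    obtain ⟨u, rfl⟩ := Ψ.surjective f
    rw [hφ]
    exact h u u.2
  · intro y hy h
    have hsurjW : Function.Surjective (φ.domRestrict W) := by
      refine LinearMap.injective_iff_surjective.1 ?_
      rw [injective_iff_map_eq_zero]
      exact fun x hx => Subtype.ext (hinjW x x.2 hx)
    have hy0 : Ψ ⟨y, hy⟩ = 0 := by
      ext w
      obtain ⟨x, rfl⟩ := hsurjW w
      exact (hφ x ⟨y, hy⟩).trans (h x x.2)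
    exact congrArg Subtype.val (Ψ.map_eq_zero_iff.1 hy0)
end

section
/- Let ℓ be a prime and n a positive integer with ℓ ≥ n, and let x ∈ GL_n(𝔽_ℓ) be unipotent, i.e. (x − 1)^n = 0. Define the n×n matrix log(x) := −∑_{i=1}^{ℓ−1} (1 − x)^i / i, and for t ∈ 𝔽_ℓ define x^t := exp(t·log(x)) where exp(y) := ∑_{i=0}^{ℓ−1} y^i / i!. Then x^t is an invertible matrix for every t ∈ 𝔽_ℓ, x^1 = x, and x^{s+t} = x^s · x^t for all s, t ∈ 𝔽_ℓ; in other words, t ↦ x^t is a group homomorphism from the additive group of 𝔽_ℓ to GL_n(𝔽_ℓ) sending 1 to x. -/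
/-!
Everything happens in `𝔽_ℓ[X]`, modulo `X ^ ℓ`; matrix identities follow by evaluating.

Write `E` for the truncated exponential and `L` for the truncated logarithm of `1 + X`.

* `X ^ ℓ ∣ E(sX) E(tX) - E((s+t)X)`: compare coefficients below degree `ℓ`, where the binomial
  theorem applies because the factorials are invertible (`X_pow_dvd_truncExp`). Evaluating at
  `log x`, whose `ℓ`-th power vanishes, gives additivity; since `x ^ 0 = 1`, invertibility follows.
* `X ^ ℓ ∣ E(L) - (1 + X)`: modulo `X ^ (ℓ - 1)` one has `(1 + X) L' = 1` and `E(L)' = E(L) L'`, so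
  `H = E(L) - (1 + X)` satisfies `(1 + X) H' = H` modulo `X ^ (ℓ - 1)` with `H(0) = 0`. The
  resulting recursion on coefficients kills those below degree `ℓ` (`X_pow_dvd_of_ode`).
  Evaluating at `x - 1` gives `x ^ 1 = x`.
-/

open Polynomial

namespace UnipotentPowers

variable {ℓ : ℕ}

/-- The polynomial `∑_{i < ℓ} s ^ i / i! X ^ i`, i.e. the truncated exponential of `s X`. -/
noncomputable def truncExp (ℓ : ℕ) (s : ZMod ℓ) : (ZMod ℓ)[X] :=
  ∑ i ∈ Finset.range ℓ, C ((Nat.factorial i : ZMod ℓ)⁻¹ * s ^ i) * X ^ i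

/-- The truncated logarithm of `1 + X`, namely `-∑_{1 ≤ i < ℓ} (-X) ^ i / i`. -/
noncomputable def truncLog (ℓ : ℕ) : (ZMod ℓ)[X] :=
  -∑ i ∈ Finset.Icc 1 (ℓ - 1), C ((i : ZMod ℓ)⁻¹) * (-X) ^ i

lemma coeff_truncExp (s : ZMod ℓ) {m : ℕ} (hm : m < ℓ) :
    (truncExp ℓ s).coeff m = (Nat.factorial m : ZMod ℓ)⁻¹ * s ^ m := by
  simp only [truncExp, finsetSum_coeff, coeff_C_mul, coeff_X_pow]
  simp [hm]

lemma natCast_ne_zero [Fact ℓ.Prime] {m : ℕ} (h0 : m ≠ 0) (hm : m < ℓ) : (m : ZMod ℓ) ≠ 0 := by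
  rw [Ne, ZMod.natCast_eq_zero_iff]
  exact fun h => h0 (Nat.eq_zero_of_dvd_of_lt h hm)

lemma factorial_ne_zero [Fact ℓ.Prime] {m : ℕ} (hm : m < ℓ) :
    (Nat.factorial m : ZMod ℓ) ≠ 0 := by
  rw [Ne, ZMod.natCast_eq_zero_iff, (Fact.out : ℓ.Prime).dvd_factorial]
  omega

lemma X_pow_dvd_truncExp [Fact ℓ.Prime] (s t : ZMod ℓ) :
    X ^ ℓ ∣ truncExp ℓ (s + t) - truncExp ℓ s * truncExp ℓ t := by
  rw [X_pow_dvd_iff]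
  intro m hm
  rw [coeff_sub, coeff_mul, coeff_truncExp _ hm, (Commute.all s t).add_pow', Finset.mul_sum,
    sub_eq_zero]
  refine Finset.sum_congr rfl fun p hp => ?_
  rw [Finset.HasAntidiagonal.mem_antidiagonal] at hp
  have h1 : p.1 < ℓ := by omega
  have h2 : p.2 < ℓ := by omega
  rw [coeff_truncExp _ h1, coeff_truncExp _ h2]
  have f0 := factorial_ne_zero hm
  have f1 := factorial_ne_zero h1
  have f2 := factorial_ne_zero h2
  have hc : (m.choose p.1 : ZMod ℓ) * (p.1.factorial : ZMod ℓ) * (p.2.factorial : ZMod ℓ)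
      = (m.factorial : ZMod ℓ) := by
    have := Nat.choose_mul_factorial_mul_factorial (n := m) (k := p.1) (by omega)
    rw [show m - p.1 = p.2 by omega] at this
    rw [← this, Nat.cast_mul, Nat.cast_mul]
  rw [nsmul_eq_mul]
  field_simp
  linear_combination (s ^ p.1 * t ^ p.2) * hc

/-- In characteristic `ℓ`, the equation `(1 + X) H' = H` modulo `X ^ (ℓ - 1)` determines `H`
modulo `X ^ ℓ` from its constant coefficient: the coefficient of degree `k + 1` is obtained from the
one of degree `k` on dividing by `k + 1 < ℓ`. -/
lemma X_pow_dvd_of_ode [Fact ℓ.Prime] (H : (ZMod ℓ)[X]) (h0 : H.coeff 0 = 0)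
    (h : X ^ (ℓ - 1) ∣ (1 + X) * derivative H - H) : X ^ ℓ ∣ H := by
  rw [X_pow_dvd_iff] at h ⊢
  intro m hm
  induction m with
  | zero => exact h0
  | succ k ih =>
    have hk := ih (by omega)
    have hh := h k (by omega)
    have hne := natCast_ne_zero (ℓ := ℓ) (Nat.succ_ne_zero k) hm
    rw [add_mul, one_mul, coeff_sub, coeff_add, hk, coeff_derivative] at hh
    have hX : (X * derivative H).coeff k = 0 := by
      cases k with
      | zero => simp
      | succ j => rw [coeff_X_mul, coeff_derivative, hk, zero_mul]
    rw [hX] at hh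
    push_cast at hne
    simpa [hne] using hh

lemma X_dvd_truncLog : X ∣ truncLog ℓ := by
  rw [truncLog, dvd_neg]
  refine Finset.dvd_sum fun i hi => Dvd.dvd.mul_left ?_ _
  rw [Finset.mem_Icc] at hi
  have hi0 : i ≠ 0 := by omega
  exact (dvd_neg.2 dvd_rfl).trans (dvd_pow_self (-X) hi0)

lemma derivative_truncLog [Fact ℓ.Prime] :
    derivative (truncLog ℓ) = ∑ i ∈ Finset.range (ℓ - 1), (-X) ^ i := by
  rw [truncLog, ← Finset.Ico_succ_right_eq_Icc, Finset.sum_Ico_eq_sum_range, derivative_neg,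
    derivative_sum, ← Finset.sum_neg_distrib]
  refine Finset.sum_congr (by simp) fun i hi => ?_
  have hi' : i + 1 < ℓ := by simp at hi; omega
  have hne := natCast_ne_zero (ℓ := ℓ) (Nat.succ_ne_zero i) hi'
  rw [Nat.succ_eq_add_one] at hne
  rw [add_comm 1 i, derivative_C_mul, derivative_pow, derivative_neg, derivative_X,
    Nat.add_sub_cancel, ← mul_assoc, ← mul_assoc, ← C_mul, inv_mul_cancel₀ hne]
  simp

lemma one_add_X_mul_derivative_truncLog [Fact ℓ.Prime] :
    (1 + X) * derivative (truncLog ℓ) = 1 - (-X) ^ (ℓ - 1) := by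
  rw [derivative_truncLog]
  have := mul_neg_geom_sum (-X : (ZMod ℓ)[X]) (ℓ - 1)
  rwa [sub_neg_eq_add] at this

lemma derivative_truncExp_one [Fact ℓ.Prime] :
    derivative (truncExp ℓ 1) =
      truncExp ℓ 1 - C ((Nat.factorial (ℓ - 1) : ZMod ℓ)⁻¹) * X ^ (ℓ - 1) := by
  obtain ⟨k, hk⟩ : ∃ k, ℓ = k + 1 := ⟨ℓ - 1, by have := (Fact.out : ℓ.Prime).pos; omega⟩
  have hE : truncExp ℓ 1 = ∑ i ∈ Finset.range (k + 1),
      C ((Nat.factorial i : ZMod ℓ)⁻¹) * X ^ i := by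
    rw [truncExp, Finset.sum_congr (by rw [hk])]
    intro i _
    simp
  have hk1 : ℓ - 1 = k := by omega
  rw [hE, hk1, Finset.sum_range_succ _ k, add_sub_cancel_right, ← Finset.sum_range_succ _ k,
    Finset.sum_range_succ' _ k, derivative_add, derivative_sum]
  simp only [pow_zero, mul_one, derivative_C, add_zero]
  refine Finset.sum_congr rfl fun i hi => ?_
  have hi' : i + 1 < ℓ := by simp at hi; omega
  have f0 := natCast_ne_zero (ℓ := ℓ) (Nat.succ_ne_zero i) hi'
  have f1 := factorial_ne_zero (ℓ := ℓ) (m := i) (by omega)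
  rw [Nat.succ_eq_add_one] at f0
  rw [derivative_C_mul_X_pow, Nat.add_sub_cancel]
  congr 2
  rw [Nat.factorial_succ, Nat.cast_mul]
  field_simp

lemma X_pow_dvd_truncExp_comp_truncLog [Fact ℓ.Prime] :
    X ^ ℓ ∣ (truncExp ℓ 1).comp (truncLog ℓ) - (1 + X) := by
  have hpos := (Fact.out : ℓ.Prime).pos
  apply X_pow_dvd_of_ode
  · have hL : (truncLog ℓ).eval 0 = 0 := by
      rw [← coeff_zero_eq_eval_zero]
      exact X_dvd_iff.1 X_dvd_truncLog
    have h1 := coeff_truncExp (ℓ := ℓ) 1 hpos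
    rw [coeff_zero_eq_eval_zero] at h1 ⊢
    simp [eval_comp, hL, h1]
  · obtain ⟨Q, hQ⟩ := X_dvd_truncLog (ℓ := ℓ)
    have hL := one_add_X_mul_derivative_truncLog (ℓ := ℓ)
    have hLp : truncLog ℓ ^ (ℓ - 1) = X ^ (ℓ - 1) * Q ^ (ℓ - 1) := by
      rw [← mul_pow, ← hQ]
    rw [derivative_sub, derivative_comp, derivative_truncExp_one]
    simp only [sub_comp, mul_comp, C_comp, X_pow_comp, derivative_add, derivative_one,
      derivative_X, zero_add]
    rw [hLp]
    rw [neg_pow] at hL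
    set F := (truncExp ℓ 1).comp (truncLog ℓ)
    set c : (ZMod ℓ)[X] := C ((Nat.factorial (ℓ - 1) : ZMod ℓ)⁻¹)
    refine ⟨-F * (-1) ^ (ℓ - 1) - c * Q ^ (ℓ - 1) * (1 - (-1) ^ (ℓ - 1) * X ^ (ℓ - 1)), ?_⟩
    linear_combination (F - c * (X ^ (ℓ - 1) * Q ^ (ℓ - 1))) * hL

end UnipotentPowers

open UnipotentPowers

/-- Let `ℓ ≥ n` with `ℓ` prime and `n ≥ 1`, and let `x ∈ GL_n(𝔽_ℓ)` be
unipotent, i.e. `(x − 1)^n = 0`.  With `log x := −∑_{i=1}^{ℓ−1} (1−x)^i / i`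
and `x^t := exp(t·log x)` where `exp y := ∑_{i=0}^{ℓ−1} y^i / i!`, the matrix
`x^t` is invertible for every `t ∈ 𝔽_ℓ`, `x^1 = x`, and
`x^{s+t} = x^s · x^t`; i.e. `t ↦ x^t` is a homomorphism from the additive
group `𝔽_ℓ` to `GL_n(𝔽_ℓ)` sending `1` to `x`. -/
theorem one_parameter_subgroup_of_unipotent
    (ℓ n : ℕ) (hℓ : ℓ.Prime) (hn : 0 < n) (hln : n ≤ ℓ)
    (x : Matrix (Fin n) (Fin n) (ZMod ℓ)) (hx : (x - 1) ^ n = 0) :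
    ∀ logx : Matrix (Fin n) (Fin n) (ZMod ℓ),
      logx = -∑ i ∈ Finset.Icc 1 (ℓ - 1), ((i : ZMod ℓ))⁻¹ • (1 - x) ^ i →
    ∀ xpow : ZMod ℓ → Matrix (Fin n) (Fin n) (ZMod ℓ),
      xpow = (fun t => ∑ i ∈ Finset.range ℓ,
        ((Nat.factorial i : ZMod ℓ))⁻¹ • (t • logx) ^ i) →
    (∀ t : ZMod ℓ, IsUnit (xpow t)) ∧
    xpow 1 = x ∧
    (∀ s t : ZMod ℓ, xpow (s + t) = xpow s * xpow t) := by
  intro logx hlog xpow hpow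
  have : Fact ℓ.Prime := ⟨hℓ⟩
  have hxℓ : (x - 1) ^ ℓ = 0 := pow_eq_zero_of_le hln hx
  have hL : aeval (x - 1) (truncLog ℓ) = logx := by
    rw [hlog]
    simp [truncLog, Algebra.smul_def]
  have hLℓ : logx ^ ℓ = 0 := by
    obtain ⟨c, hc⟩ := pow_dvd_pow_of_dvd (X_dvd_truncLog (ℓ := ℓ)) ℓ
    rw [← hL, ← map_pow, hc]
    simp [hxℓ]
  have hE : ∀ t, xpow t = aeval logx (truncExp ℓ t) := by
    intro t
    rw [hpow, truncExp, map_sum]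
    refine Finset.sum_congr rfl fun i _ => ?_
    rw [_root_.smul_pow, smul_smul, Algebra.smul_def, map_mul (aeval logx), aeval_C, map_pow,
      aeval_X]
  have hadd : ∀ s t : ZMod ℓ, xpow (s + t) = xpow s * xpow t := by
    intro s t
    obtain ⟨c, hc⟩ := X_pow_dvd_truncExp s t
    have := congrArg (aeval logx) hc
    rw [map_sub, map_mul, map_mul, map_pow, aeval_X, hLℓ, zero_mul, sub_eq_zero] at this
    rw [hE, hE, hE, this]
  have hzero : xpow 0 = 1 := by
    rw [hpow]
    simp only [zero_smul]
    rw [Finset.sum_eq_single_of_mem 0 (Finset.mem_range.2 hℓ.pos)]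
    · simp
    · intro i _ hi
      rw [zero_pow hi, smul_zero]
  refine ⟨fun t => ?_, ?_, hadd⟩
  · refine IsUnit.of_mul_eq_one (xpow (-t)) ?_
    rw [← hadd, add_neg_cancel, hzero]
  · obtain ⟨c, hc⟩ := X_pow_dvd_truncExp_comp_truncLog (ℓ := ℓ)
    have := congrArg (aeval (x - 1)) hc
    rw [map_sub, aeval_comp, hL, map_mul, map_pow, aeval_X, hxℓ, zero_mul, sub_eq_zero] at this
    rw [hE, this]
    simp
end
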